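/- Upper bound for the Hilbert transform of a monotone even function (Corollary htcor): Let f : ℝ → ℝ be C¹, even, bounded, with f(0) = 0 and f'(x) ≥ 0 for x > 0, and let Hf(x) = (1/π) lim_{R→∞} lim_{ε→0+} ∫_{ε<|x−y|<R} f(y)/(x−y) dy be its Hilbert transform. Then for every q with 1 < q < 2 and every x > 0: π · Hf(x) ≤ log(q − 1) · ( f(qx) − f(q^{-1}x) ). (Note log(q−1) < 0 and f(qx) − f(q^{-1}x) ≥ 0, so in particular Hf(x) ≤ 0.) -/

import Mathlib

open Set MeasureTheory Filter Topology

/-- `HilbertPVAt f x v` says that the iterated principal value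
`lim_{R→∞} lim_{ε→0+} ∫_{ε<|x−y|<R} f(y)/(x−y) dy` exists and equals `v`
(so that the Hilbert transform of `f` at `x` is `v/π`). -/
def HilbertPVAt (f : ℝ → ℝ) (x v : ℝ) : Prop :=
  ∃ g : ℝ → ℝ,
    (∀ R, 0 < R → Tendsto (fun ε => ∫ y in {y : ℝ | ε < |x - y| ∧ |x - y| < R}, f y / (x - y))
      (nhdsWithin 0 (Ioi 0)) (nhds (g R))) ∧
    Tendsto g atTop (nhds v)

/-!
Substituting `y = x ± t` turns the truncated principal value into
`∫ t in ε..R, (f (x - t) - f (x + t)) / t`. Since `f` is nondecreasing in `|y|`, the integrand is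
nonpositive, so for an upper bound all but a subinterval may be discarded. For `q ≤ 2` keep
`[(q - 1) x, x]`: there `x + t ≥ q x` and `|x - t| ≤ (2 - q) x ≤ q⁻¹ x`, so the numerator is at most
`f (q⁻¹ x) - f (q x)`, while `∫ dt / t = -log (q - 1)`.
-/

section EvenMonotone

variable {α β : Type*} [AddCommGroup α] [LinearOrder α] [IsOrderedAddMonoid α] [Preorder β]
  {f : α → β}

lemma map_le_map_of_even_of_monotoneOn_of_abs_le (heven : Function.Even f)
    (hmono : MonotoneOn f (Ici 0)) {a b : α} (hab : |a| ≤ |b|) : f a ≤ f b := by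
  have map_abs (y : α) : f |y| = f y := by
    rcases abs_choice y with h | h <;> simp only [h, heven y]
  rw [← map_abs a, ← map_abs b]
  exact hmono (abs_nonneg a) (abs_nonneg b) hab

lemma map_sub_le_map_add_of_even_of_monotoneOn (heven : Function.Even f)
    (hmono : MonotoneOn f (Ici 0)) {x t : α} (hx : 0 ≤ x) (ht : 0 ≤ t) :
    f (x - t) ≤ f (x + t) := by
  refine map_le_map_of_even_of_monotoneOn_of_abs_le heven hmono ?_
  calc |x - t| ≤ |x| + |t| := abs_sub x t
    _ = |x + t| := by rw [abs_of_nonneg hx, abs_of_nonneg ht, abs_of_nonneg (add_nonneg hx ht)]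

end EvenMonotone

lemma intervalIntegrable_of_even_of_monotoneOn {E : Type*} [NormedAddCommGroup E]
    [ConditionallyCompleteLinearOrder E] [OrderTopology E] [SecondCountableTopology E]
    {f : ℝ → E} (heven : Function.Even f) (hmono : MonotoneOn f (Ici 0)) (a b : ℝ) :
    IntervalIntegrable f volume a b := by
  have from_zero_nonneg {c : ℝ} (hc : 0 ≤ c) : IntervalIntegrable f volume 0 c :=
    (hmono.mono fun _ ht => (uIcc_of_le hc ▸ ht).1).intervalIntegrable
  have from_zero (c : ℝ) : IntervalIntegrable f volume 0 c := by
    rcases le_total 0 c with hc | hc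
    · exact from_zero_nonneg hc
    · rw [IntervalIntegrable.iff_comp_neg]
      simpa only [heven _, neg_zero] using from_zero_nonneg (neg_nonneg.2 hc)
  exact (from_zero a).symm.trans (from_zero b)

lemma map_sub_sub_map_add_le_of_even_of_monotoneOn {f : ℝ → ℝ} (heven : Function.Even f)
    (hmono : MonotoneOn f (Ici 0)) {x q t : ℝ} (hx : 0 ≤ x) (hq : 1 ≤ q)
    (ht : t ∈ Icc ((q - 1) * x) x) :
    f (x - t) - f (x + t) ≤ f (q⁻¹ * x) - f (q * x) := by
  have ht0 : 0 ≤ t := (mul_nonneg (sub_nonneg.2 hq) hx).trans ht.1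
  have two_sub_le_inv : 2 - q ≤ q⁻¹ := by
    rw [← one_div, le_div_iff₀ (by linarith)]
    linarith [sq_nonneg (q - 1)]
  refine sub_le_sub (map_le_map_of_even_of_monotoneOn_of_abs_le heven hmono ?_)
    (map_le_map_of_even_of_monotoneOn_of_abs_le heven hmono ?_)
  · rw [abs_of_nonneg (sub_nonneg.2 ht.2), abs_of_nonneg (by positivity)]
    calc x - t ≤ (2 - q) * x := by linarith [ht.1]
      _ ≤ q⁻¹ * x := mul_le_mul_of_nonneg_right two_sub_le_inv hx
  · rw [abs_of_nonneg (by positivity), abs_of_nonneg (by positivity)]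
    linarith [ht.1]

section IntegralDiv

lemma intervalIntegrable_div_of_continuousOn {A : Type*} [NormedDivisionRing A] {f g : ℝ → A}
    {a b : ℝ} {μ : Measure ℝ} (hf : IntervalIntegrable f μ a b) (hg : ContinuousOn g (uIcc a b))
    (hg0 : ∀ t ∈ uIcc a b, g t ≠ 0) : IntervalIntegrable (fun t => f t / g t) μ a b := by
  simpa only [div_eq_mul_inv, Pi.inv_apply] using hf.mul_continuousOn (hg.inv₀ hg0)

variable {φ : ℝ → ℝ} {c a b : ℝ}

lemma intervalIntegrable_div_id (hφ : IntervalIntegrable φ volume a b) (ha : 0 < a)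
    (hab : a ≤ b) : IntervalIntegrable (fun t => φ t / t) volume a b :=
  intervalIntegrable_div_of_continuousOn hφ continuousOn_id fun _ ht =>
    (ha.trans_le (uIcc_of_le hab ▸ ht).1).ne'

lemma integral_div_id_le_mul_log (hφ : IntervalIntegrable φ volume a b) (ha : 0 < a)
    (hab : a ≤ b) (hφc : ∀ t ∈ Icc a b, φ t ≤ c) :
    ∫ t in a..b, φ t / t ≤ c * Real.log (b / a) :=
  calc ∫ t in a..b, φ t / t
    _ ≤ ∫ t in a..b, c / t :=
      intervalIntegral.integral_mono_on hab (intervalIntegrable_div_id hφ ha hab)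
        (intervalIntegrable_div_id intervalIntegrable_const ha hab) fun t ht =>
          div_le_div_of_nonneg_right (hφc t ht) (ha.le.trans ht.1)
    _ = c * Real.log (b / a) := by
      simp only [div_eq_mul_inv c, intervalIntegral.integral_const_mul,
        integral_inv_of_pos ha (ha.trans_le hab)]

lemma integral_div_id_nonpos (hφ : IntervalIntegrable φ volume a b) (ha : 0 < a) (hab : a ≤ b)
    (hφ0 : ∀ t ∈ Icc a b, φ t ≤ 0) : ∫ t in a..b, φ t / t ≤ 0 := by
  simpa only [zero_mul] using integral_div_id_le_mul_log hφ ha hab hφ0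

lemma integral_div_id_le_mul_log_of_nonpos {ε R : ℝ} (hφ : IntervalIntegrable φ volume ε R)
    (hε : 0 < ε) (hεa : ε ≤ a) (hab : a ≤ b) (hbR : b ≤ R) (hφ0 : ∀ t ∈ Icc ε R, φ t ≤ 0)
    (hφc : ∀ t ∈ Icc a b, φ t ≤ c) : ∫ t in ε..R, φ t / t ≤ c * Real.log (b / a) := by
  have ha : 0 < a := hε.trans_le hεa
  have hb : 0 < b := ha.trans_le hab
  have haR : a ≤ R := hab.trans hbR
  have hφ₁ : IntervalIntegrable φ volume ε a :=
    hφ.mono_set (uIcc_subset_uIcc_left (mem_uIcc_of_le hεa haR))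
  have hφ₂₃ : IntervalIntegrable φ volume a R := hφ₁.symm.trans hφ
  have hφ₂ : IntervalIntegrable φ volume a b :=
    hφ₂₃.mono_set (uIcc_subset_uIcc_left (mem_uIcc_of_le hab hbR))
  have hφ₃ : IntervalIntegrable φ volume b R := hφ₂.symm.trans hφ₂₃
  calc ∫ t in ε..R, φ t / t
    _ = (∫ t in ε..a, φ t / t) + (∫ t in a..b, φ t / t) + ∫ t in b..R, φ t / t := by
      have h₁ := intervalIntegrable_div_id hφ₁ hε hεa
      have h₂ := intervalIntegrable_div_id hφ₂ ha hab
      have h₃ := intervalIntegrable_div_id hφ₃ hb hbR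
      rw [intervalIntegral.integral_add_adjacent_intervals h₁ h₂,
        intervalIntegral.integral_add_adjacent_intervals (h₁.trans h₂) h₃]
    _ ≤ 0 + c * Real.log (b / a) + 0 := by
      gcongr
      · exact integral_div_id_nonpos hφ₁ hε hεa fun t ht => hφ0 t ⟨ht.1, ht.2.trans haR⟩
      · exact integral_div_id_le_mul_log hφ₂ ha hab hφc
      · exact integral_div_id_nonpos hφ₃ hb hbR fun t ht =>
          hφ0 t ⟨(hεa.trans hab).trans ht.1, ht.2⟩
    _ = c * Real.log (b / a) := by ring

end IntegralDiv

section PrincipalValue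

lemma intervalIntegrable_comp_const_sub {E : Type*} [NormedAddCommGroup E] {f : ℝ → E}
    (hf : ∀ a b, IntervalIntegrable f volume a b) (x a b : ℝ) :
    IntervalIntegrable (fun t => f (x - t)) volume a b := by
  simpa only [sub_sub_cancel] using (hf (x - a) (x - b)).comp_sub_left x

lemma intervalIntegrable_comp_const_add {E : Type*} [NormedAddCommGroup E] {f : ℝ → E}
    (hf : ∀ a b, IntervalIntegrable f volume a b) (x a b : ℝ) :
    IntervalIntegrable (fun t => f (x + t)) volume a b := by
  simpa only [add_sub_cancel_left] using (hf (x + a) (x + b)).comp_add_left x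

variable {f : ℝ → ℝ} {x : ℝ}

lemma setOf_lt_abs_sub_and_abs_sub_lt {ε R : ℝ} (hε : 0 ≤ ε) :
    {y : ℝ | ε < |x - y| ∧ |x - y| < R} = Ioo (x - R) (x - ε) ∪ Ioo (x + ε) (x + R) := by
  ext y
  simp only [mem_ofPred_eq, mem_union, mem_Ioo, lt_abs, abs_lt]
  grind

lemma setIntegral_div_sub_eq_integral_sub_div (hf : ∀ a b, IntervalIntegrable f volume a b)
    {ε R : ℝ} (hε : 0 < ε) (hεR : ε ≤ R) :
    ∫ y in {y : ℝ | ε < |x - y| ∧ |x - y| < R}, f y / (x - y) =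
      ∫ t in ε..R, (f (x - t) - f (x + t)) / t := by
  have hle_left : x - R ≤ x - ε := by linarith
  have hle_right : x + ε ≤ x + R := by linarith
  have hleft : IntervalIntegrable (fun y => f y / (x - y)) volume (x - R) (x - ε) :=
    intervalIntegrable_div_of_continuousOn (hf _ _) (by fun_prop) fun y hy => by
      rw [uIcc_of_le hle_left] at hy
      linarith [hy.2]
  have hright : IntervalIntegrable (fun y => f y / (x - y)) volume (x + ε) (x + R) :=
    intervalIntegrable_div_of_continuousOn (hf _ _) (by fun_prop) fun y hy => by
      rw [uIcc_of_le hle_right] at hy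
      linarith [hy.1]
  have hdisj : Disjoint (Ioo (x - R) (x - ε)) (Ioo (x + ε) (x + R)) :=
    Set.disjoint_left.2 fun y hy hy' => by linarith [hy.2, hy'.1]
  have hleft_subst : ∫ y in (x - R)..(x - ε), f y / (x - y) = ∫ t in ε..R, f (x - t) / t := by
    simp only [← intervalIntegral.integral_comp_sub_left, sub_sub_cancel]
  have hright_subst : ∫ y in (x + ε)..(x + R), f y / (x - y) = -∫ t in ε..R, f (x + t) / t := by
    simp only [← intervalIntegral.integral_comp_add_left, sub_add_cancel_left, div_neg,
      intervalIntegral.integral_neg]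
  rw [setOf_lt_abs_sub_and_abs_sub_lt hε.le, setIntegral_union hdisj measurableSet_Ioo
      ((intervalIntegrable_iff_integrableOn_Ioo_of_le hle_left).1 hleft)
      ((intervalIntegrable_iff_integrableOn_Ioo_of_le hle_right).1 hright),
    ← integral_Ioc_eq_integral_Ioo, ← integral_Ioc_eq_integral_Ioo,
    ← intervalIntegral.integral_of_le hle_left, ← intervalIntegral.integral_of_le hle_right,
    hleft_subst, hright_subst, ← sub_eq_add_neg]
  simp only [sub_div]
  exact (intervalIntegral.integral_sub
    (intervalIntegrable_div_id (intervalIntegrable_comp_const_sub hf x ε R) hε hεR)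
    (intervalIntegrable_div_id (intervalIntegrable_comp_const_add hf x ε R) hε hεR)).symm

lemma HilbertPVAt.le_of_eventually_integral_le {v B : ℝ} (hH : HilbertPVAt f x v)
    (hf : ∀ a b, IntervalIntegrable f volume a b)
    (hB : ∀ᶠ R in atTop, ∀ᶠ ε in 𝓝[>] 0, ∫ t in ε..R, (f (x - t) - f (x + t)) / t ≤ B) :
    v ≤ B := by
  obtain ⟨g, hg, hgv⟩ := hH
  refine le_of_tendsto hgv ?_
  filter_upwards [hB, eventually_gt_atTop 0] with R hBR hR
  refine le_of_tendsto (hg R hR) ?_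
  filter_upwards [hBR, Ioc_mem_nhdsGT hR] with ε hBε hε
  rwa [setIntegral_div_sub_eq_integral_sub_div hf hε.1 hε.2]

lemma HilbertPVAt.le_log_mul_of_le_two {v q : ℝ} (hH : HilbertPVAt f x v)
    (heven : Function.Even f) (hmono : MonotoneOn f (Ici 0)) (hx : 0 < x) (hq1 : 1 < q)
    (hq2 : q ≤ 2) : v ≤ Real.log (q - 1) * (f (q * x) - f (q⁻¹ * x)) := by
  have hf := intervalIntegrable_of_even_of_monotoneOn heven hmono
  have ha : 0 < (q - 1) * x := mul_pos (sub_pos.2 hq1) hx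
  have hax : (q - 1) * x ≤ x := mul_le_of_le_one_left hx.le (by linarith)
  refine hH.le_of_eventually_integral_le hf ?_
  filter_upwards [eventually_ge_atTop x] with R hR
  filter_upwards [Ioc_mem_nhdsGT ha] with ε hε
  calc ∫ t in ε..R, (f (x - t) - f (x + t)) / t
    _ ≤ (f (q⁻¹ * x) - f (q * x)) * Real.log (x / ((q - 1) * x)) :=
      integral_div_id_le_mul_log_of_nonpos
        ((intervalIntegrable_comp_const_sub hf x ε R).sub
          (intervalIntegrable_comp_const_add hf x ε R))
        hε.1 hε.2 hax hR
        (fun t ht => sub_nonpos.2 <|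
          map_sub_le_map_add_of_even_of_monotoneOn heven hmono hx.le (hε.1.le.trans ht.1))
        fun t ht => map_sub_sub_map_add_le_of_even_of_monotoneOn heven hmono hx.le hq1.le ht
    _ = Real.log (q - 1) * (f (q * x) - f (q⁻¹ * x)) := by
      rw [div_mul_cancel_right₀ hx.ne', Real.log_inv]
      ring

end PrincipalValue

theorem hilbert_monotone_even_upper_bound_general {f : ℝ → ℝ} (heven : Function.Even f)
    (hmono : MonotoneOn f (Ici 0)) {x v q : ℝ} (hx : 0 < x) (hH : HilbertPVAt f x v)
    (hq1 : 1 < q) : v ≤ Real.log (q - 1) * (f (q * x) - f (q⁻¹ * x)) := by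
  rcases le_total q 2 with hq2 | hq2
  · exact hH.le_log_mul_of_le_two heven hmono hx hq1 hq2
  -- For `q = 2` the bound reads `v ≤ 0`; for `q ≥ 2` the right-hand side is nonnegative.
  have hv : v ≤ 0 := by
    have h := hH.le_log_mul_of_le_two heven hmono hx one_lt_two le_rfl
    rwa [show (2 : ℝ) - 1 = 1 by norm_num, Real.log_one, zero_mul] at h
  have hf : f (q⁻¹ * x) ≤ f (q * x) :=
    hmono (mem_Ici.2 (by positivity)) (mem_Ici.2 (by positivity))
      (mul_le_mul_of_nonneg_right ((inv_le_one_of_one_le₀ hq1.le).trans hq1.le) hx.le)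
  exact hv.trans (mul_nonneg (Real.log_nonneg (by linarith)) (sub_nonneg.2 hf))

/-- **Upper bound for the Hilbert transform of a monotone even function (Corollary htcor).**
If `f` is `C¹`, even, bounded, `f(0) = 0`, nondecreasing on `(0,∞)`, and its Hilbert transform
exists at `x > 0` with `π·Hf(x) = v`, then for every `1 < q < 2`,
`π·Hf(x) ≤ log(q−1)·(f(qx) − f(x/q))`. -/
theorem hilbert_monotone_even_upper_bound (f : ℝ → ℝ) (hf : ContDiff ℝ 1 f)
    (heven : ∀ x, f (-x) = f x) (M : ℝ) (hM : ∀ x, |f x| ≤ M) (hf0 : f 0 = 0)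
    (hmono : ∀ x > (0:ℝ), 0 ≤ deriv f x)
    (x : ℝ) (hx : 0 < x) (v : ℝ) (hH : HilbertPVAt f x v)
    (q : ℝ) (hq1 : 1 < q) (hq2 : q < 2) :
    v ≤ Real.log (q - 1) * (f (q * x) - f (q⁻¹ * x)) := by
  refine hilbert_monotone_even_upper_bound_general heven
    (monotoneOn_of_deriv_nonneg (convex_Ici 0) hf.continuous.continuousOn
      (hf.differentiable one_ne_zero).differentiableOn ?_) hx hH hq1
  simpa only [interior_Ici, mem_Ioi] using hmono
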